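/- For every nonempty open subset U of [√2,2] and every L > 0 there exists a parameter s ∈ U such that the tent map f_s has standard shadowing with some accuracy function σ (with σ(ε) → 0 as ε → 0), but f_s does not have standard shadowing with accuracy σ(ε) = L·ε. In particular, no single Lipschitz constant L works for all parameters in U with the shadowing property. -/

import Mathlib

open Set Filter

/-- The tent map with slope `s`, extended to all of ℝ. -/
noncomputable def tentMap (s x : ℝ) : ℝ := if x ≤ 1 / 2 then s * x else s * (1 - x)

/-- The tent map `f_s` has standard shadowing on [0,1] with accuracy σ. -/
def TentHasShadowingWithAccuracy (s : ℝ) (σ : ℝ → ℝ) : Prop :=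
  ∃ ε₀ > (0 : ℝ), ∀ ε ∈ Ioo (0 : ℝ) ε₀, ∀ x : ℕ → ℝ,
    (∀ k : ℕ, x k ∈ Icc (0 : ℝ) 1) →
    (∀ k : ℕ, |tentMap s (x k) - x (k + 1)| ≤ ε) →
    ∃ p ∈ Icc (0 : ℝ) 1, ∀ k : ℕ, |x k - (tentMap s)^[k] p| < σ ε


lemma pseries_aux (θ : ℕ → ℝ) (hθ : ∀ k, |θ k| = 1) (a b : ℝ) (ha : 0 < a) (hab : a < b) (hb : b ≤ 1)
    (h : ∀ t ∈ Ioo a b, HasSum (fun k => θ k * t ^ k) 0) : False := by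
  set p := FormalMultilinearSeries.ofScalars ℝ θ with hp
  have hr : 1 ≤ p.radius := by
    have := p.le_radius_of_bound (r := 1) 1 (fun n => by
      simp [hp, hθ])
    simpa using this
  have hps := p.hasFPowerSeriesOnBall (lt_of_lt_of_le one_pos hr)
  have hA : AnalyticOnNhd ℝ p.sum (Metric.ball 0 1) := by
    refine hps.analyticOnNhd.mono ?_
    rw [← Metric.eball_ofReal]
    apply Metric.eball_subset_eball
    simpa using hr
  have hz : ∀ t ∈ Ioo a b, p.sum t = 0 := by
    intro t ht
    have := h t ht
    simp only [FormalMultilinearSeries.sum]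
    rw [← this.tsum_eq]
    congr 1; ext k
    simp [hp, mul_comm]
  have hm : (a+b)/2 ∈ Ioo a b := ⟨by linarith, by linarith⟩
  have hEq := hA.eqOn_zero_of_preconnected_of_eventuallyEq_zero
    (convex_ball (0:ℝ) 1).isPreconnected (z₀ := (a+b)/2) (by
      rw [Metric.mem_ball, dist_zero_right, Real.norm_eq_abs, abs_lt]
      constructor <;> linarith [hm.1, hm.2])
    (by filter_upwards [isOpen_Ioo.mem_nhds hm] with t ht using hz t ht)
  have h0 := hEq (x := 0) (by simp)
  have h1 := hps.hasFPowerSeriesAt.coeff_zero (fun _ => 0)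
  simp only [hp, FormalMultilinearSeries.ofScalars_apply_eq] at h1
  have := hθ 0
  simp at h1 h0
  rw [h1, ← hp, h0] at this
  simp at this

lemma nested_aux (f : ℝ → ℝ) (hf : Continuous f) (A : ℕ → Set ℝ) (hA : ∀ k, IsCompact (A k))
    (hne : ∀ k, (A k).Nonempty) (hs : ∀ k, A (k+1) ⊆ f '' A k) :
    ∃ p, ∀ k, f^[k] p ∈ A k := by
  let B : ℕ → Set ℝ := fun k => ⋂ i ∈ Finset.range (k+1), f^[i] ⁻¹' (A i)
  have hlift : ∀ k, ∀ z ∈ A k, ∃ p, f^[k] p = z ∧ ∀ i ≤ k, f^[i] p ∈ A i := by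
    intro k
    induction k with
    | zero => intro z hz; exact ⟨z, rfl, fun i hi => by
        obtain rfl : i = 0 := by omega
        exact hz⟩
    | succ k ih =>
      intro z hz
      obtain ⟨y, hy, rfl⟩ := hs k hz
      obtain ⟨p, hp, hpi⟩ := ih y hy
      refine ⟨p, by rw [Function.iterate_succ_apply', hp], fun i hi => ?_⟩
      rcases Nat.lt_or_ge i (k+1) with h | h
      · exact hpi i (by omega)
      · obtain rfl : i = k+1 := by omega
        rw [Function.iterate_succ_apply', hp]; exact hz
  have hcl : ∀ k, IsClosed (B k) := fun k =>
    isClosed_biInter fun i _ => (hA i).isClosed.preimage (hf.iterate i)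
  have := IsCompact.nonempty_iInter_of_sequence_nonempty_isCompact_isClosed B
    (fun k => by
      intro x hx
      simp only [B, mem_iInter, Finset.mem_range] at hx ⊢
      exact fun i hi => hx i (by omega))
    (fun k => by
      obtain ⟨z, hz⟩ := hne k
      obtain ⟨p, _, hp⟩ := hlift k z hz
      exact ⟨p, by simp only [B, mem_iInter, Finset.mem_range]; exact fun i hi => hp i (by omega)⟩)
    ((hA 0).of_isClosed_subset (hcl 0) (by
      intro x hx
      simp only [B, mem_iInter, Finset.mem_range] at hx
      exact hx 0 (by omega))) hcl
  obtain ⟨p, hp⟩ := this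
  refine ⟨p, fun k => ?_⟩
  have := mem_iInter.1 hp k
  simp only [B, mem_iInter, Finset.mem_range] at this
  exact this k (by omega)

lemma tent_eq (s x : ℝ) : tentMap s x = s / 2 - s * |x - 1 / 2| := by
  unfold tentMap
  split_ifs with h
  · rw [abs_of_nonpos (by linarith)]; ring
  · rw [abs_of_pos (by linarith)]; ring

lemma tent_cont (s : ℝ) : Continuous (tentMap s) := by
  have : tentMap s = fun x => s / 2 - s * |x - 1 / 2| := funext (tent_eq s)
  rw [this]; fun_prop

lemma tent_mem {s : ℝ} (h0 : 0 ≤ s) (h2 : s ≤ 2) {x : ℝ} (hx : x ∈ Icc (0:ℝ) 1) :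
    tentMap s x ∈ Icc (0:ℝ) 1 := by
  have h1 : |x - 1/2| ≤ 1/2 := abs_le.2 ⟨by linarith [hx.1], by linarith [hx.2]⟩
  have h3 := abs_nonneg (x - 1/2)
  rw [tent_eq]
  constructor <;> nlinarith

lemma tent_iter_mem {s : ℝ} (h0 : 0 ≤ s) (h2 : s ≤ 2) {x : ℝ} (hx : x ∈ Icc (0:ℝ) 1) (n : ℕ) :
    (tentMap s)^[n] x ∈ Icc (0:ℝ) 1 := by
  induction n with
  | zero => exact hx
  | succ n ih => rw [Function.iterate_succ_apply']; exact tent_mem h0 h2 ih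

lemma crit_cont (n : ℕ) : Continuous (fun s : ℝ => (tentMap s)^[n] (1/2)) := by
  induction n with
  | zero => exact continuous_const
  | succ n ih =>
    have : (fun s : ℝ => (tentMap s)^[n+1] (1/2)) =
        fun s => s / 2 - s * |(tentMap s)^[n] (1/2) - 1 / 2| := by
      ext s; rw [Function.iterate_succ_apply', tent_eq]
    rw [this]; fun_prop

lemma crit_poly (n : ℕ) : ∃ S : Set (Polynomial ℝ), S.Finite ∧ (∀ P ∈ S, P.eval 0 = 0) ∧
    ∀ s : ℝ, ∃ P ∈ S, (tentMap s)^[n+1] (1/2) = P.eval s := by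
  induction n with
  | zero =>
    refine ⟨{Polynomial.X * Polynomial.C (1/2)}, by simp, by simp, fun s => ⟨_, rfl, ?_⟩⟩
    simp [tentMap]
    try ring
  | succ n ih =>
    obtain ⟨S, hS, h0, h⟩ := ih
    refine ⟨(fun P => Polynomial.X * P) '' S ∪ (fun P => Polynomial.X * (1 - P)) '' S,
      (hS.image _).union (hS.image _), ?_, fun s => ?_⟩
    · rintro P (⟨Q, hQ, rfl⟩ | ⟨Q, hQ, rfl⟩) <;> simp
    · obtain ⟨P, hP, hPs⟩ := h s
      rw [Function.iterate_succ_apply', hPs]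
      unfold tentMap
      split_ifs
      · exact ⟨_, Or.inl ⟨P, hP, rfl⟩, by simp⟩
      · exact ⟨_, Or.inr ⟨P, hP, rfl⟩, by simp⟩

lemma crit_finite (n : ℕ) : {s : ℝ | (tentMap s)^[n+1] (1/2) = 1/2}.Finite := by
  obtain ⟨S, hS, h0, h⟩ := crit_poly n
  refine (hS.biUnion (t := fun P => {s : ℝ | (P - Polynomial.C (1/2)).IsRoot s}) ?_).subset ?_
  · intro P hP
    apply Polynomial.finite_setOfPred_isRoot
    intro hc
    have := congrArg (Polynomial.eval 0) hc
    simp [h0 P hP] at this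
  · intro s hs
    obtain ⟨P, hP, hPs⟩ := h s
    simp only [mem_iUnion]
    refine ⟨P, hP, ?_⟩
    have hs' : (tentMap s)^[n+1] (1/2) = 1/2 := hs
    simp only [mem_ofPred_eq, Polynomial.IsRoot, Polynomial.eval_sub, Polynomial.eval_C]
    rw [← hPs, hs']; simp

lemma crit_dense (a b : ℝ) (ha : 1 < a) (hab : a < b) (hb : b ≤ 2) :
    ∃ s ∈ Ioo a b, ∃ n, (tentMap s)^[n+1] (1/2) = 1/2 := by
  by_contra! hcon
  have hsign : ∀ n, ∃ e : ℝ, (e = 1 ∨ e = -1) ∧ ∀ s ∈ Ioo a b,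
      |(tentMap s)^[n] (1/2) - 1/2| = e * ((tentMap s)^[n] (1/2) - 1/2) := by
    intro n
    cases n with
    | zero => exact ⟨1, Or.inl rfl, fun s _ => by simp⟩
    | succ n =>
      have hc : Continuous (fun s : ℝ => (tentMap s)^[n+1] (1/2) - 1/2) :=
        (crit_cont (n+1)).sub continuous_const
      rcases (isPreconnected_Ioo (a := a) (b := b)).eq_or_eq_neg_of_sq_eq
        hc.abs.continuousOn hc.continuousOn (fun s _ => by simp)
        (fun {s} hs => sub_ne_zero.2 (hcon s hs n)) with h | h
      · exact ⟨1, Or.inl rfl, fun s hs => by simpa using h hs⟩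
      · exact ⟨-1, Or.inr rfl, fun s hs => by simpa using h hs⟩
  choose e he hes using hsign
  let θ : ℕ → ℝ := fun n => ∏ i ∈ Finset.range n, (- e i)
  have hθ : ∀ n, |θ n| = 1 := by
    intro n
    simp only [θ, Finset.abs_prod]
    apply Finset.prod_eq_one
    intro i _
    rcases he i with h | h <;> simp [h]
  have hee : ∀ n, e n * e n = 1 := fun n => by rcases he n with h | h <;> simp [h]
  have hsum : ∀ s ∈ Ioo a b, ∀ n, θ n * ((tentMap s)^[n] (1/2) - 1/2) * (s⁻¹) ^ n =
      (s - 1) / 2 * s⁻¹ * ∑ k ∈ Finset.range n, θ (k+1) * (s⁻¹) ^ k := by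
    intro s hs n
    have hs0 : s ≠ 0 := by linarith [hs.1]
    induction n with
    | zero => simp
    | succ n ih =>
      rw [Finset.sum_range_succ, mul_add, ← ih, Function.iterate_succ_apply', tent_eq,
        hes n s hs]
      have h1 : θ (n+1) = θ n * (- e n) := Finset.prod_range_succ _ _
      rw [h1, pow_succ]
      have h2 : s * s⁻¹ = 1 := mul_inv_cancel₀ hs0
      linear_combination (θ n * ((tentMap s)^[n] (1/2) - 1/2) * s⁻¹ ^ n) * (hee n) +
        (θ n * s⁻¹ ^ n * e n * e n * ((tentMap s)^[n] (1/2) - 1/2)) * h2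
  refine pseries_aux (fun k => θ (k+1)) (fun k => hθ _) b⁻¹ a⁻¹ (inv_pos.2 (by linarith))
    (by gcongr) (inv_le_one_of_one_le₀ ha.le) ?_
  intro t ht
  have hb0 : 0 < b⁻¹ := inv_pos.2 (by linarith)
  have ht0 : 0 < t := hb0.trans ht.1
  have ht1 : t < 1 := ht.2.trans_le (inv_le_one_of_one_le₀ ha.le)
  have hs : t⁻¹ ∈ Ioo a b := ⟨(lt_inv_comm₀ ht0 (by linarith)).1 ht.2,
    (inv_lt_comm₀ (by linarith) ht0).1 ht.1⟩
  have hS : Summable (fun k => θ (k+1) * t ^ k) := by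
    apply Summable.of_norm_bounded (summable_geometric_of_lt_one ht0.le ht1)
    intro k
    simp [hθ, abs_of_pos ht0]
  have h1 := hS.hasSum.tendsto_sum_nat
  have h2 : Tendsto (fun n => ∑ k ∈ Finset.range n, θ (k+1) * t ^ k) atTop (nhds 0) := by
    have hc : 0 < (t⁻¹ - 1) / 2 * t := by
      have : 1 < t⁻¹ := ha.trans hs.1
      apply mul_pos _ ht0; linarith
    have h3 : ∀ n, ∑ k ∈ Finset.range n, θ (k+1) * t ^ k =
        ((t⁻¹ - 1) / 2 * t)⁻¹ * (θ n * ((tentMap t⁻¹)^[n] (1/2) - 1/2) * t ^ n) := by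
      intro n
      have := hsum _ hs n
      rw [inv_inv] at this
      rw [this, inv_mul_cancel_left₀ hc.ne']
    simp_rw [h3]
    rw [← mul_zero (((t⁻¹ - 1) / 2 * t)⁻¹)]
    apply Tendsto.const_mul
    apply squeeze_zero_norm (a := fun n => t ^ n) _ (tendsto_pow_atTop_nhds_zero_of_lt_one ht0.le ht1)
    intro n
    have hm := tent_iter_mem (s := t⁻¹) (by positivity) (by linarith [hs.2]) (x := 1/2)
      ⟨by norm_num, by norm_num⟩ n
    have : |(tentMap t⁻¹)^[n] (1/2) - 1/2| ≤ 1 :=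
      abs_le.2 ⟨by linarith [hm.1], by linarith [hm.2]⟩
    rw [Real.norm_eq_abs, abs_mul, abs_mul, hθ, abs_of_pos (pow_pos ht0 n), one_mul]
    exact mul_le_of_le_one_left (by positivity) this
  rw [← tendsto_nhds_unique h1 h2]
  exact hS.hasSum

/-- The admissible (possibly one-sidedly truncated) intervals around a pseudo-orbit point. -/
def GoodSet (s : ℝ) (n : ℕ) (δ ε : ℝ) (E : ℕ → ℝ) (x : ℝ) (A : Set ℝ) : Prop :=
  A = {y | |y - x| ≤ δ} ∨ ∃ (j : ℕ) (u : ℝ), 1 ≤ j ∧ j ≤ n ∧ (u = 1 ∨ u = -1) ∧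
    -(E j * ε) ≤ u * (x - (tentMap s)^[j] (1/2)) ∧ |x - (tentMap s)^[j] (1/2)| ≤ δ ∧
    A = {y | |y - x| ≤ δ ∧ 0 ≤ u * (y - (tentMap s)^[j] (1/2))}

lemma GoodSet.trunc {s : ℝ} {n : ℕ} {δ ε : ℝ} {E : ℕ → ℝ} {x : ℝ} (j : ℕ) (u : ℝ)
    (h1 : 1 ≤ j) (hn : j ≤ n) (hu : u = 1 ∨ u = -1)
    (hx : -(E j * ε) ≤ u * (x - (tentMap s)^[j] (1/2))) (hE : E j * ε ≤ δ) :
    GoodSet s n δ ε E x {y | |y - x| ≤ δ ∧ 0 ≤ u * (y - (tentMap s)^[j] (1/2))} := by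
  by_cases h : |x - (tentMap s)^[j] (1/2)| ≤ δ
  · exact Or.inr ⟨j, u, h1, hn, hu, hx, h, rfl⟩
  · left
    ext y
    simp only [mem_ofPred_eq, and_iff_left_iff_imp]
    intro hy
    rw [abs_le] at h hy
    rcases hu with rfl | rfl
    · by_contra hc
      exact h ⟨by linarith, by linarith⟩
    · by_contra hc
      exact h ⟨by linarith, by linarith⟩

lemma GoodSet.compact {s : ℝ} {n : ℕ} {δ ε : ℝ} {E : ℕ → ℝ} {x : ℝ} {A : Set ℝ}
    (h : GoodSet s n δ ε E x A) : IsCompact A := by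
  have hb : {y : ℝ | |y - x| ≤ δ} = Metric.closedBall x δ := by
    ext y; simp [Real.dist_eq]
  rcases h with rfl | ⟨j, u, _, _, _, _, _, rfl⟩
  · rw [hb]; exact isCompact_closedBall x δ
  · have : {y | |y - x| ≤ δ ∧ 0 ≤ u * (y - (tentMap s)^[j] (1/2))} =
        Metric.closedBall x δ ∩ {y | 0 ≤ u * (y - (tentMap s)^[j] (1/2))} := by
      rw [← hb]; rfl
    rw [this]
    exact (isCompact_closedBall x δ).inter_right (isClosed_le (by fun_prop) (by fun_prop))

lemma GoodSet.nonempty {s : ℝ} {n : ℕ} {δ ε : ℝ} (hδ : 0 ≤ δ) {E : ℕ → ℝ} {x : ℝ} {A : Set ℝ}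
    (h : GoodSet s n δ ε E x A) : A.Nonempty := by
  rcases h with rfl | ⟨j, u, _, _, _, _, hx, rfl⟩
  · exact ⟨x, by simpa using hδ⟩
  · exact ⟨(tentMap s)^[j] (1/2), by rwa [abs_sub_comm], by simp⟩

lemma GoodSet.subset {s : ℝ} {n : ℕ} {δ ε : ℝ} {E : ℕ → ℝ} {x : ℝ} {A : Set ℝ}
    (h : GoodSet s n δ ε E x A) : ∀ y ∈ A, |y - x| ≤ δ := by
  rcases h with rfl | ⟨j, u, _, _, _, _, _, rfl⟩
  · exact fun y hy => hy
  · exact fun y hy => hy.1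

lemma GoodSet.step {s : ℝ} (hs : 1 < s) {n : ℕ} (hn : 1 ≤ n) (hc : (tentMap s)^[n] (1/2) = 1/2)
    {δ ε η M : ℝ} {E : ℕ → ℝ} (hε : 0 < ε) (hη : ∀ j, 1 ≤ j → j < n →
      η ≤ |(tentMap s)^[j] (1/2) - 1/2|) (hδη : 2 * δ ≤ η)
    (hE1 : E 1 = 1) (hE : ∀ j, E (j+1) = s * E j + 1) (hM : ∀ j ≤ n, E j ≤ M) (hM0 : 0 ≤ M)
    (hMδ : M * ε ≤ δ) (hδ : δ + ε + 2 * s * M * ε ≤ s * δ)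
    {x x' : ℝ} {A : Set ℝ} (hA : GoodSet s n δ ε E x A) (hx : |tentMap s x - x'| ≤ ε) :
    ∃ A', GoodSet s n δ ε E x' A' ∧ A' ⊆ tentMap s '' A := by
  have hs0 : 0 < s := by linarith
  have hsM : 0 ≤ 2 * s * M * ε := by positivity
  have hEδ : ∀ j ≤ n, E j * ε ≤ δ := fun j hj =>
    (mul_le_mul_of_nonneg_right (hM j hj) hε.le).trans hMδ
  have hc1 : (tentMap s)^[1] (1/2) = s / 2 := by simp [tent_eq]
  have hx2 := hx
  rw [tent_eq, abs_le] at hx2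
  -- the truncated set at the top
  have hT : GoodSet s n δ ε E x' {y | |y - x'| ≤ δ ∧ 0 ≤ (-1) * (y - (tentMap s)^[1] (1/2))} := by
    refine GoodSet.trunc 1 (-1) le_rfl hn (Or.inr rfl) ?_ (hEδ 1 hn)
    rw [hc1, hE1]
    have := mul_nonneg hs0.le (abs_nonneg (x - 1/2))
    linarith [hx2.1]
  -- preimages of points below the top
  have key : ∀ z u : ℝ, (u = 1 ∨ u = -1) → z ≤ s / 2 → |z - x'| ≤ δ →
      -(M * ε) ≤ u * (x - 1/2) →
      ∃ y, |y - x| ≤ δ ∧ 0 ≤ u * (y - 1/2) ∧ tentMap s y = z := by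
    intro z u hu hz hzx hux
    set v := (s / 2 - z) / s with hv
    have hv0 : 0 ≤ v := div_nonneg (by linarith) hs0.le
    have hsv : s * v = s / 2 - z := by rw [hv]; field_simp
    rw [abs_le] at hzx
    have h1 : s * |v - u * (x - 1/2)| ≤ s * δ := by
      have h2 : s * |v - (|x - 1/2|)| ≤ δ + ε := by
        have hm : s * |v - (|x - 1/2|)| = |s * (v - (|x - 1/2|))| := by
          rw [abs_mul, abs_of_pos hs0]
        rw [hm, mul_sub, hsv, abs_le]
        constructor <;> linarith [hx2.1, hx2.2]
      have h3 : |(|x - 1/2|) - u * (x - 1/2)| ≤ 2 * (M * ε) := by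
        have hMe : 0 ≤ M * ε := by positivity
        have hab : |x - 1/2| = |u * (x - 1/2)| := by
          rcases hu with rfl | rfl <;> simp [abs_sub_comm]
        rw [hab, abs_le]
        rcases abs_cases (u * (x - 1/2)) with ⟨h, h'⟩ | ⟨h, h'⟩ <;> rw [h] <;>
          constructor <;> linarith
      have h4 := abs_add_le (v - (|x - 1/2|)) ((|x - 1/2|) - u * (x - 1/2))
      rw [sub_add_sub_cancel] at h4
      nlinarith
    have h1' : |v - u * (x - 1/2)| ≤ δ := le_of_mul_le_mul_left h1 hs0
    refine ⟨1/2 + u * v, ?_, ?_, ?_⟩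
    · rw [abs_le] at h1' ⊢
      rcases hu with rfl | rfl <;> constructor <;> linarith [h1'.1, h1'.2]
    · rcases hu with rfl | rfl <;> linarith
    · rw [tent_eq]
      have : |1/2 + u * v - 1/2| = v := by
        rcases hu with rfl | rfl <;> simp [abs_of_nonneg hv0]
      rw [this, hsv]; ring
  rcases hA with rfl | ⟨j, u, hj1, hjn, hu, hux, hxj, rfl⟩
  · refine ⟨_, hT, ?_⟩
    rintro z ⟨hz, hz2⟩
    rw [hc1] at hz2
    have hMe : 0 ≤ M * ε := by positivity
    obtain ⟨u, hu, hu2⟩ : ∃ u : ℝ, (u = 1 ∨ u = -1) ∧ -(M * ε) ≤ u * (x - 1/2) := by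
      rcases le_total (1/2) x with h | h
      · exact ⟨1, Or.inl rfl, by linarith⟩
      · exact ⟨-1, Or.inr rfl, by linarith⟩
    obtain ⟨y, hy, _, hyz⟩ := key z u hu (by linarith) hz hu2
    exact ⟨y, hy, hyz⟩
  · rcases hjn.lt_or_eq with hlt | rfl
    · -- affine step
      set c := (tentMap s)^[j] (1/2) with hcj
      have hcη := hη j hj1 hlt
      rw [← hcj] at hcη
      obtain ⟨t, ht, htc⟩ : ∃ t : ℝ, (t = 1 ∨ t = -1) ∧ η ≤ t * (1/2 - c) := by
        rcases abs_cases (c - 1/2) with ⟨h, _⟩ | ⟨h, _⟩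
        · exact ⟨-1, Or.inr rfl, by linarith⟩
        · exact ⟨1, Or.inl rfl, by linarith⟩
      have haff : ∀ y, |y - c| ≤ 2 * δ → tentMap s y = s / 2 + s * t * (y - 1/2) := by
        intro y hy
        rw [abs_le] at hy
        rw [tent_eq]
        rcases ht with rfl | rfl
        · rw [abs_of_nonpos (by linarith [hy.2])]; ring
        · rw [abs_of_nonneg (by linarith [hy.1])]; ring
      have hδ0 : 0 ≤ δ := (abs_nonneg _).trans hxj
      have hfc := haff c (by simpa using hδ0)
      have hfx := haff x (by linarith)
      have hsucc : (tentMap s)^[j+1] (1/2) = tentMap s c := by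
        rw [Function.iterate_succ_apply']
      have htt : t * t = 1 := by rcases ht with rfl | rfl <;> norm_num
      have huu : u * u = 1 := by rcases hu with rfl | rfl <;> norm_num
      have hut : u * t = 1 ∨ u * t = -1 := by
        rcases ht with rfl | rfl <;> rcases hu with rfl | rfl <;> norm_num
      refine ⟨_, GoodSet.trunc (j+1) (u * t) (by omega) hlt hut ?_ (hEδ _ hlt), ?_⟩
      · rw [hsucc, hE]
        have h1 : u * t * (tentMap s x - tentMap s c) = s * (u * (x - c)) := by
          rw [hfx, hfc]; linear_combination (s * u * (x - c)) * htt
        have h2 : -ε ≤ u * t * (x' - tentMap s x) := by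
          rw [abs_le] at hx
          rcases hut with h | h <;> rw [h] <;> linarith [hx.1, hx.2]
        have h3 := mul_le_mul_of_nonneg_left hux hs0.le
        have h4 : u * t * (x' - tentMap s c) =
          u * t * (tentMap s x - tentMap s c) + u * t * (x' - tentMap s x) := by ring
        rw [h4, h1]
        linarith
      · rintro z ⟨hz, hz2⟩
        rw [hsucc] at hz2
        have hsy : s * ((z - tentMap s c) / s) = z - tentMap s c := by field_simp
        set w := (z - tentMap s c) / s with hw
        have hyx : |c + t * w - x| ≤ δ := by
          have h1 : s * t * (c + t * w - x) = z - tentMap s x := by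
            rw [hfx]; rw [hfc] at hsy
            linear_combination hsy + s * w * htt
          have h2 : |s * t * (c + t * w - x)| = s * |c + t * w - x| := by
            rw [abs_mul, abs_mul, abs_of_pos hs0]
            rcases ht with rfl | rfl <;> simp
          have h3 : |z - tentMap s x| ≤ δ + ε := by
            rw [abs_le] at hz hx ⊢
            constructor <;> linarith [hx.1, hx.2, hz.1, hz.2]
          rw [h1] at h2
          exact le_of_mul_le_mul_left (by linarith) hs0
        refine ⟨c + t * w, ⟨hyx, ?_⟩, ?_⟩
        · have : u * (c + t * w - c) = (u * t * (z - tentMap s c)) / s := by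
            rw [hw]; ring
          rw [this]
          exact div_nonneg hz2 hs0.le
        · rw [haff _ (by
            have := abs_add_le (c + t * w - x) (x - c)
            rw [sub_add_sub_cancel] at this
            linarith)]
          rw [hfc] at hsy
          linear_combination hsy + s * w * htt
    · refine ⟨_, hT, ?_⟩
      rintro z ⟨hz, hz2⟩
      rw [hc1] at hz2
      rw [hc] at hux ⊢
      have := mul_le_mul_of_nonneg_right (hM j le_rfl) hε.le
      obtain ⟨y, hy, hy2, hyz⟩ := key z u hu (by linarith) hz (by linarith)
      exact ⟨y, ⟨hy, hy2⟩, hyz⟩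

lemma orbit_bdd {s : ℝ} (hs : 1 < s) {B p : ℝ} (h : ∀ k, -B ≤ (tentMap s)^[k] p) :
    p ∈ Icc (0:ℝ) 1 := by
  have neg : ∀ q, (∀ k, -B ≤ (tentMap s)^[k] q) → 0 ≤ q := by
    intro q hq
    by_contra! hlt
    have hit : ∀ k, (tentMap s)^[k] q = s ^ k * q := by
      intro k
      induction k with
      | zero => simp
      | succ k ih =>
        have : s ^ k * q < 0 := mul_neg_of_pos_of_neg (by positivity) hlt
        rw [Function.iterate_succ_apply', ih, tentMap, if_pos (by linarith)]
        ring
    obtain ⟨k, hk⟩ := pow_unbounded_of_one_lt (B / (-q)) hs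
    have := hq k
    rw [hit, ] at this
    rw [div_lt_iff₀ (by linarith)] at hk
    linarith
  refine ⟨neg p h, ?_⟩
  by_contra! hlt
  have := neg (tentMap s p) (fun k => by
    rw [← Function.iterate_succ_apply]; exact h (k+1))
  rw [tentMap, if_neg (by linarith)] at this
  nlinarith

lemma exists_eta (s : ℝ) (n : ℕ) (hmin : ∀ j, 1 ≤ j → j < n → (tentMap s)^[j] (1/2) ≠ 1/2) :
    ∃ η > 0, ∀ j, 1 ≤ j → j < n → η ≤ |(tentMap s)^[j] (1/2) - 1/2| := by
  induction n with
  | zero => exact ⟨1, one_pos, fun j _ h => by omega⟩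
  | succ n ih =>
    obtain ⟨η, h0, h⟩ := ih (fun j h1 h2 => hmin j h1 (by omega))
    rcases Nat.eq_zero_or_pos n with rfl | hn
    · exact ⟨1, one_pos, fun j _ h => by omega⟩
    · refine ⟨min η |(tentMap s)^[n] (1/2) - 1/2|,
        lt_min h0 (abs_pos.2 (sub_ne_zero.2 (hmin n hn (by omega)))), fun j h1 h2 => ?_⟩
      rcases Nat.lt_succ_iff_lt_or_eq.1 h2 with h3 | rfl
      · exact (min_le_left _ _).trans (h j h1 h3)
      · exact min_le_right _ _

lemma shadow_of_periodic {s : ℝ} (hs : 1 < s) {n : ℕ} (hn : 1 ≤ n)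
    (hc : (tentMap s)^[n] (1/2) = 1/2)
    (hmin : ∀ j, 1 ≤ j → j < n → (tentMap s)^[j] (1/2) ≠ 1/2) :
    ∃ K > 0, TentHasShadowingWithAccuracy s (fun ε => K * ε) := by
  obtain ⟨η, hη0, hη⟩ := exists_eta s n hmin
  have hs0 : 0 < s := by linarith
  let E : ℕ → ℝ := fun j => ∑ i ∈ Finset.range j, s ^ i
  set M := E n with hM
  have hM0 : 0 ≤ M := Finset.sum_nonneg fun i _ => by positivity
  have hEM : ∀ j ≤ n, E j ≤ M := fun j hj =>
    Finset.sum_le_sum_of_subset_of_nonneg (by simpa using hj) (fun i _ _ => by positivity)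
  set K := (1 + 2 * s * M) / (s - 1) + M with hK
  have hK0 : 0 < K := by
    have : 0 < s - 1 := by linarith
    positivity
  have hK1 : 1 + 2 * s * M ≤ (s - 1) * K := by
    have h1 : 0 < s - 1 := by linarith
    have : (s - 1) * K = 1 + 2 * s * M + (s - 1) * M := by rw [hK]; field_simp
    rw [this]; nlinarith
  have hKM : M ≤ K := by
    have : 0 < s - 1 := by linarith
    have : 0 ≤ (1 + 2 * s * M) / (s - 1) := by positivity
    linarith
  refine ⟨K + 1, by linarith, η / (2 * K), by positivity, ?_⟩
  rintro ε ⟨hε, hε2⟩ x hx01 hx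
  rw [lt_div_iff₀ (by positivity)] at hε2
  have step : ∀ k A, GoodSet s n (K * ε) ε E (x k) A →
      ∃ A', GoodSet s n (K * ε) ε E (x (k+1)) A' ∧ A' ⊆ tentMap s '' A := fun k A hA =>
    GoodSet.step hs hn hc hε hη (by linarith) (by simp [E]) (fun j => geom_sum_succ) hEM hM0
      (by nlinarith) (by nlinarith) hA (hx k)
  choose! g hg1 hg2 using step
  let A : ℕ → Set ℝ := fun k => Nat.rec {y | |y - x 0| ≤ K * ε} (fun k B => g k B) k
  have hA : ∀ k, GoodSet s n (K * ε) ε E (x k) (A k) := by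
    intro k
    induction k with
    | zero => exact Or.inl rfl
    | succ k ih => exact hg1 k _ ih
  obtain ⟨p, hp⟩ := nested_aux (tentMap s) (tent_cont s) A (fun k => (hA k).compact)
    (fun k => (hA k).nonempty (by positivity)) (fun k => hg2 k _ (hA k))
  have hpx : ∀ k, |(tentMap s)^[k] p - x k| ≤ K * ε := fun k => (hA k).subset _ (hp k)
  refine ⟨p, orbit_bdd hs (B := K * ε) (fun k => ?_), fun k => ?_⟩
  · have := (abs_le.1 (hpx k)).1
    linarith [(hx01 k).1]
  · rw [abs_sub_comm]
    have := hpx k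
    show _ < (K + 1) * ε
    linarith

lemma not_shadow {s : ℝ} (hs : 1 < s) (hs2 : s < 2) {n : ℕ}
    (hmin : ∀ j, 1 ≤ j → j < n + 1 → (tentMap s)^[j] (1/2) ≠ 1/2)
    {L : ℝ} (hL : 0 < L) (hLn : L ≤ s ^ n) :
    ¬ TentHasShadowingWithAccuracy s (fun ε => L * ε) := by
  rintro ⟨ε₀, hε₀, H⟩
  obtain ⟨η, hη0, hη⟩ := exists_eta s (n+1) hmin
  have hs0 : 0 < s := by linarith
  obtain ⟨ε, hε, hεε₀, hε1, hεη⟩ : ∃ ε, 0 < ε ∧ ε < ε₀ ∧ ε ≤ 1 - s / 2 ∧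
      (s ^ n + L) * ε ≤ η := by
    have hp : 0 < s ^ n + L := by positivity
    refine ⟨min (ε₀ / 2) (min (1 - s/2) (η / (s ^ n + L))), ?_, ?_, ?_, ?_⟩
    · refine lt_min (by linarith) (lt_min (by linarith) (by positivity))
    · exact (min_le_left _ _).trans_lt (by linarith)
    · exact (min_le_right _ _).trans (min_le_left _ _)
    · rw [mul_comm, ← le_div_iff₀ hp]
      exact (min_le_right _ _).trans (min_le_right _ _)
  let x : ℕ → ℝ := fun k => Nat.casesOn k (1/2) (fun m => (tentMap s)^[m] (s/2 + ε))
  have hx0 : x 0 = 1/2 := rfl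
  have hxs : ∀ m, x (m+1) = (tentMap s)^[m] (s/2 + ε) := fun m => rfl
  obtain ⟨p, _, hp⟩ := H ε ⟨hε, hεε₀⟩ x (fun k => by
      cases k with
      | zero => rw [hx0]; constructor <;> norm_num
      | succ m =>
        rw [hxs]
        exact tent_iter_mem hs0.le hs2.le ⟨by positivity, by linarith⟩ m)
    (fun k => by
      cases k with
      | zero => rw [hx0, hxs]; simp [tent_eq, abs_of_pos hε]
      | succ m => rw [hxs, hxs, Function.iterate_succ_apply']; simpa using hε.le)
  have main : ∀ m ≤ n, ∃ t : ℝ, (t = 1 ∨ t = -1) ∧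
      t * (x (m+1) - (tentMap s)^[m+1] (1/2)) = s ^ m * ε ∧
      t * ((tentMap s)^[m+1] p - (tentMap s)^[m+1] (1/2)) ≤ 0 := by
    intro m
    induction m with
    | zero =>
      intro _
      refine ⟨1, Or.inl rfl, by rw [hxs]; simp [tent_eq], ?_⟩
      have := mul_nonneg hs0.le (abs_nonneg (p - 1/2))
      simp [tent_eq] at this ⊢
      exact this
    | succ m ih =>
      intro hm
      obtain ⟨t, ht, h1, h2⟩ := ih (by omega)
      have hcη := hη (m+1) (by omega) (by omega)
      have hpx := hp (m+1)
      simp only at hpx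
      have hxs' : x (m+1+1) = tentMap s (x (m+1)) := by
        rw [hxs, hxs, Function.iterate_succ_apply']
      rw [hxs', Function.iterate_succ_apply' _ (m+1), Function.iterate_succ_apply' _ (m+1)]
      set c := (tentMap s)^[m+1] (1/2)
      set q := (tentMap s)^[m+1] p
      set y := x (m+1)
      have hsm : s ^ m * ε ≤ s ^ n * ε :=
        mul_le_mul_of_nonneg_right (pow_le_pow_right₀ hs.le (by omega)) hε.le
      have hyc : |y - c| ≤ s ^ n * ε := by
        have h3 : 0 ≤ s ^ m * ε := by positivity
        rw [abs_le]
        rcases ht with rfl | rfl <;> constructor <;> linarith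
      have hLe : 0 < L * ε := by positivity
      rw [abs_lt] at hpx
      rw [abs_le] at hyc
      obtain ⟨r, hr, hrc⟩ : ∃ r : ℝ, (r = 1 ∨ r = -1) ∧ η ≤ r * (1/2 - c) := by
        rcases abs_cases (c - 1/2) with ⟨h, _⟩ | ⟨h, _⟩
        · exact ⟨-1, Or.inr rfl, by linarith⟩
        · exact ⟨1, Or.inl rfl, by linarith⟩
      have haff : ∀ y, |y - c| ≤ (s ^ n + L) * ε →
          tentMap s y = s / 2 + s * r * (y - 1/2) := by
        intro y hy
        rw [abs_le] at hy
        rw [tent_eq]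
        rcases hr with rfl | rfl
        · rw [abs_of_nonpos (by linarith [hy.2])]; ring
        · rw [abs_of_nonneg (by linarith [hy.1])]; ring
      have hrr : r * r = 1 := by rcases hr with rfl | rfl <;> norm_num
      rw [haff y (abs_le.2 ⟨by linarith [hyc.1], by linarith [hyc.2]⟩),
        haff q (abs_le.2 ⟨by linarith [hyc.1, hpx.2], by linarith [hyc.2, hpx.1]⟩),
        haff c (by rw [sub_self, abs_zero]; positivity)]
      refine ⟨t * r, ?_, ?_, ?_⟩
      · rcases ht with rfl | rfl <;> rcases hr with rfl | rfl <;> norm_num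
      · rw [pow_succ]
        linear_combination s * h1 + (s * t * (y - c)) * hrr
      · have h4 : t * r * (s / 2 + s * r * (q - 1/2) - (s / 2 + s * r * (c - 1/2))) =
            s * (t * (q - c)) := by linear_combination (s * t * (q - c)) * hrr
        rw [h4]
        exact mul_nonpos_of_nonneg_of_nonpos hs0.le h2
  obtain ⟨t, ht, h1, h2⟩ := main n le_rfl
  have hpx := abs_lt.1 (hp (n+1))
  simp only at hpx
  have hLe : L * ε ≤ s ^ n * ε := mul_le_mul_of_nonneg_right hLn hε.le
  rcases ht with rfl | rfl <;> linarith [hpx.1, hpx.2]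

/-- In every nonempty open subset of [√2,2] and for every L > 0 there is a
parameter s whose tent map has standard shadowing with some accuracy function
(tending to 0 at 0), but not with the Lipschitz accuracy σ(ε) = L·ε: no single
Lipschitz shadowing constant works on any open set of parameters. -/
theorem tent_map_no_uniform_lipschitz_shadowing_constant
    (U : Set ℝ) (hU : IsOpen U) (hUne : (U ∩ Icc (Real.sqrt 2) 2).Nonempty)
    (L : ℝ) (hL : 0 < L) :
    ∃ s ∈ U ∩ Icc (Real.sqrt 2) 2,
      (∃ σ : ℝ → ℝ, (∀ ε > (0 : ℝ), 0 < σ ε) ∧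
        Tendsto σ (nhdsWithin 0 (Ioi 0)) (nhds 0) ∧
        TentHasShadowingWithAccuracy s σ) ∧
      ¬ TentHasShadowingWithAccuracy s (fun ε => L * ε) := by
  obtain ⟨s₀, hs₀U, hs₀⟩ := hUne
  have h1r : (1:ℝ) < Real.sqrt 2 := by
    rw [Real.lt_sqrt] <;> norm_num
  have hr2 : Real.sqrt 2 < 2 := by
    rw [Real.sqrt_lt'] <;> norm_num
  obtain ⟨N, hN⟩ := pow_unbounded_of_one_lt L h1r
  -- an open nonempty set of parameters without short critical periods
  have hW : (U ∩ Ioo (Real.sqrt 2) 2).Nonempty := by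
    have hcl : s₀ ∈ closure (Ioo (Real.sqrt 2) 2) := by
      rw [closure_Ioo hr2.ne]; exact hs₀
    exact mem_closure_iff.1 hcl U hU hs₀U
  have hWo : IsOpen (U ∩ Ioo (Real.sqrt 2) 2) := hU.inter isOpen_Ioo
  set F : Set ℝ := ⋃ m ∈ Finset.range N, {s : ℝ | (tentMap s)^[m+1] (1/2) = 1/2} with hF
  have hFf : F.Finite := Set.Finite.biUnion (Finset.finite_toSet _) (fun m _ => crit_finite m)
  have hVo : IsOpen ((U ∩ Ioo (Real.sqrt 2) 2) \ F) := hWo.sdiff hFf.isClosed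
  have hVne : ((U ∩ Ioo (Real.sqrt 2) 2) \ F).Nonempty := by
    obtain ⟨w, hw⟩ := hW
    exact ((infinite_of_mem_nhds w (hWo.mem_nhds hw)).sdiff hFf).nonempty
  obtain ⟨v, hv⟩ := hVne
  obtain ⟨a, b, hvab, hab⟩ := mem_nhds_iff_exists_Ioo_subset.1 (hVo.mem_nhds hv)
  obtain ⟨s, hs, k, hk⟩ := crit_dense (max a (Real.sqrt 2)) (min b 2)
    (lt_max_of_lt_right h1r)
    (max_lt (lt_min (hvab.1.trans hvab.2) ((hvab.1).trans hv.1.2.2))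
      (lt_min (hv.1.2.1.trans hvab.2) hr2)) (min_le_right _ _)
  have hsV : s ∈ (U ∩ Ioo (Real.sqrt 2) 2) \ F :=
    hab ⟨(le_max_left _ _).trans_lt hs.1, hs.2.trans_le (min_le_left _ _)⟩
  have hsr := hsV.1.2
  have hs1 : 1 < s := h1r.trans hsr.1
  refine ⟨s, ⟨hsV.1.1, hsr.1.le, hsr.2.le⟩, ?_, ?_⟩
  · classical
    have hex : ∃ n, 1 ≤ n ∧ (tentMap s)^[n] (1/2) = 1/2 := ⟨k+1, by omega, hk⟩
    have hsp := Nat.find_spec hex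
    obtain ⟨K, hK, hsh⟩ := shadow_of_periodic hs1 hsp.1 hsp.2
      (fun j h1 h2 h3 => Nat.find_min hex h2 ⟨h1, h3⟩)
    refine ⟨fun ε => K * ε, fun ε hε => mul_pos hK hε, ?_, hsh⟩
    have : Tendsto (fun ε : ℝ => K * ε) (nhds 0) (nhds (K * 0)) :=
      (continuous_const.mul continuous_id).tendsto 0
    rw [mul_zero] at this
    exact this.mono_left nhdsWithin_le_nhds
  · refine not_shadow (n := N) hs1 hsr.2 (fun j h1 h2 h3 => hsV.2 ?_) hL
      (hN.le.trans (pow_le_pow_left₀ (by linarith) hsr.1.le N))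
    rw [hF]
    simp only [mem_iUnion]
    refine ⟨j - 1, by simp; omega, ?_⟩
    show (tentMap s)^[j - 1 + 1] (1/2) = 1/2
    rw [Nat.sub_add_cancel h1]; exact h3
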